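/- arXiv:1510.00669 — 7 statements merged into one kernel-verified Lean document; each statement's English description precedes it below -/
import Mathlib

section
/- Let E be a category with pullbacks in which, for every map p in R (defined below), the pullback functor p* between slice categories has a right adjoint p_* (pushforward). Let I be a class of maps in E, let R be the class of maps with the right lifting property with respect to I, and let L be the class of maps with the left lifting property with respect to R. Then the following are equivalent: (i) the pullback of a map in L along a map in R is again in L; (ii) for every p : X → Y in R, the pushforward p_* sends objects of the slice over X whose underlying map lies in R to objects whose underlying map lies in R; (iii) the pullback of a map in I along a map in R is in L. -/
/-!
Statement 0 (Proposition `thm:frobenius-equivalence`): for a wfs free on a class `I`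
(`R = rlp I`, `L = llp R`), assuming pushforwards along `R`-maps exist, the following
are equivalent: (i) the Frobenius property, (ii) pushforward along `R`-maps preserves
`R`-maps, (iii) the pullback of an `I`-map along an `R`-map is an `L`-map.
-/

open CategoryTheory Category Limits

universe v u

namespace GS

variable {E : Type u} [Category.{v} E]

/-- The class of maps with the right lifting property with respect to all maps in `J`. -/
def rlp (J : MorphismProperty E) : MorphismProperty E :=
  fun _ _ p => ∀ ⦃A B : E⦄ (i : A ⟶ B), J i → HasLiftingProperty i p

/-- The class of maps with the left lifting property with respect to all maps in `J`. -/
def llp (J : MorphismProperty E) : MorphismProperty E :=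
  fun _ _ i => ∀ ⦃X Y : E⦄ (p : X ⟶ Y), J p → HasLiftingProperty i p

theorem rlp_baseChange (J : MorphismProperty E) {P X Y Z : E} {a : P ⟶ X} {b : P ⟶ Y}
    {f : X ⟶ Z} {g : Y ⟶ Z} (sq : IsPullback a b f g) (hf : rlp J f) : rlp J b := by
  intro A B i hi
  have := hf i hi
  exact sq.hasLiftingProperty i

/-- Transposition: lifts against the pushforward from lifts against the original map. -/
theorem rlp_pushforward [HasPullbacks E] (I : MorphismProperty E)
    (h3 : ∀ ⦃A B X Y : E⦄ (t : A ⟶ B) (g : A ⟶ X) (i : B ⟶ Y) (p : X ⟶ Y),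
        IsPullback t g i p → I i → rlp I p → llp (rlp I) g)
    {X Y : E} (p : X ⟶ Y) (hp : rlp I p) (P : Over X ⥤ Over Y)
    (adj : Over.pullback p ⊣ P) (q : Over X) (hq : rlp I q.hom) : rlp I (P.obj q).hom := by
  intro A B i hi
  refine ⟨fun {f b} sq => ?_⟩
  let φ : Over.mk (i ≫ b) ⟶ Over.mk b := Over.homMk i rfl
  let u : Over.mk (i ≫ b) ⟶ P.obj q := Over.homMk f sq.w
  let u' : (Over.pullback p).obj (Over.mk (i ≫ b)) ⟶ q := (adj.homEquiv _ _).symm u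
  have pbB : IsPullback (pullback.fst b p) (pullback.snd b p) b p := IsPullback.of_hasPullback b p
  have pbA : IsPullback (pullback.fst (i ≫ b) p) (pullback.snd (i ≫ b) p) (i ≫ b) p :=
    IsPullback.of_hasPullback _ _
  have e1 : ((Over.pullback p).map φ).left ≫ pullback.fst b p = pullback.fst (i ≫ b) p ≫ i := by
    simp [φ, pullback.lift_fst, pullback.lift_snd]
  have e2 : ((Over.pullback p).map φ).left ≫ pullback.snd b p = pullback.snd (i ≫ b) p := by
    simp [φ, pullback.lift_fst, pullback.lift_snd]
  have pb : IsPullback (pullback.fst (i ≫ b) p) ((Over.pullback p).map φ).left i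
      (pullback.fst b p) := by
    refine (IsPullback.of_right (h₁₁ := ((Over.pullback p).map φ).left)
      (h₁₂ := pullback.snd b p) (h₂₁ := i) (h₂₂ := b) (v₁₁ := pullback.fst (i ≫ b) p)
      (v₁₂ := pullback.fst b p) (v₁₃ := p) ?_ e1 pbB.flip).flip
    rw [e2]; exact pbA.flip
  have hl := h3 _ _ _ _ pb hi (rlp_baseChange I pbB.flip hp) q.hom hq
  have sq' : CommSq u'.left ((Over.pullback p).map φ).left q.hom (pullback.snd b p) :=
    ⟨(Over.w u').trans e2.symm⟩
  let v' : (Over.pullback p).obj (Over.mk b) ⟶ q := Over.homMk sq'.lift sq'.fac_right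
  have hv' : (Over.pullback p).map φ ≫ v' = u' := by
    ext; exact sq'.fac_left
  have hv : φ ≫ adj.homEquiv _ _ v' = u := by
    rw [← adj.homEquiv_naturality_left, hv']; simp [u']
  exact ⟨⟨(adj.homEquiv _ _ v').left, congrArg (fun k => k.left) hv,
    Over.w (adj.homEquiv _ _ v')⟩⟩

/-- Frobenius for a single pullback from preservation by pushforward. -/
theorem llp_of_pushforward [HasPullbacks E] (I : MorphismProperty E)
    {A B X Y : E} (t : A ⟶ B) (g : A ⟶ X) (i : B ⟶ Y) (p : X ⟶ Y)
    (pb : IsPullback t g i p) (hi : llp (rlp I) i) (P : Over X ⥤ Over Y)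
    (adj : Over.pullback p ⊣ P)
    (h2 : ∀ q : Over X, rlp I q.hom → rlp I (P.obj q).hom) : llp (rlp I) g := by
  intro U V r hr
  refine ⟨fun {f h} sq => ?_⟩
  let q : Over X := Over.mk (pullback.snd r h)
  have hq : rlp I q.hom := rlp_baseChange I (IsPullback.of_hasPullback r h) hr
  have hl := hi _ (h2 q hq)
  let φ : Over.mk i ⟶ Over.mk (𝟙 Y) := Over.homMk i (by simp)
  let e : pullback i p ⟶ A := pb.lift (pullback.fst i p) (pullback.snd i p) pullback.condition
  have eg : e ≫ g = pullback.snd i p := pb.lift_snd _ _ _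
  let e' : A ⟶ pullback i p := pullback.lift t g pb.w
  have ee : e' ≫ e = 𝟙 A := by apply pb.hom_ext <;> simp [e, e', pullback.lift_fst, pullback.lift_snd]
  let u' : (Over.pullback p).obj (Over.mk i) ⟶ q :=
    Over.homMk (e ≫ pullback.lift f g sq.w) (by simp [q, eg, pullback.lift_snd])
  let u : Over.mk i ⟶ P.obj q := adj.homEquiv _ _ u'
  have sq' : CommSq u.left i (P.obj q).hom (𝟙 Y) := ⟨by simpa using Over.w u⟩
  let v : Over.mk (𝟙 Y) ⟶ P.obj q := Over.homMk sq'.lift sq'.fac_right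
  have hv : φ ≫ v = u := by ext; exact sq'.fac_left
  let v' : (Over.pullback p).obj (Over.mk (𝟙 Y)) ⟶ q := (adj.homEquiv _ _).symm v
  have hv' : (Over.pullback p).map φ ≫ v' = u' := by
    rw [← adj.homEquiv_naturality_left_symm, hv]; simp [u]
  have hv'' : ((Over.pullback p).map φ).left ≫ v'.left = e ≫ pullback.lift f g sq.w :=
    congrArg (fun k => k.left) hv'
  let s : X ⟶ pullback (𝟙 Y) p := pullback.lift p (𝟙 X) (by simp)
  have hs : g ≫ s = e' ≫ ((Over.pullback p).map φ).left := by
    apply pullback.hom_ext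
    · simp [s, e', φ, pb.w, pullback.lift_fst, pullback.lift_fst_assoc]
    · simp [s, e', φ, pullback.lift_snd]
  have hw : v'.left ≫ pullback.snd r h = pullback.snd (𝟙 Y) p := Over.w v'
  refine ⟨⟨s ≫ v'.left ≫ pullback.fst r h, ?_, ?_⟩⟩
  · calc g ≫ s ≫ v'.left ≫ pullback.fst r h
        = (g ≫ s) ≫ v'.left ≫ pullback.fst r h := (assoc _ _ _).symm
      _ = e' ≫ (((Over.pullback p).map φ).left ≫ v'.left) ≫ pullback.fst r h := by
          rw [hs]; simp only [assoc]
      _ = (e' ≫ e) ≫ pullback.lift f g sq.w ≫ pullback.fst r h := by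
          rw [hv'']; simp only [assoc]
      _ = f := by rw [ee]; simp [pullback.lift_fst]
  · calc (s ≫ v'.left ≫ pullback.fst r h) ≫ r
        = s ≫ (v'.left ≫ pullback.snd r h) ≫ h := by
          simp only [assoc, pullback.condition]
      _ = h := by rw [hw]; simp [s, pullback.lift_snd_assoc]

theorem frobenius_equivalence [HasPullbacks E] (I : MorphismProperty E)
    (R : MorphismProperty E) (hR : R = rlp I)
    (L : MorphismProperty E) (hL : L = llp R)
    (hadj : ∀ {X Y : E} (p : X ⟶ Y), R p →
      ∃ P : Over X ⥤ Over Y, Nonempty (Over.pullback p ⊣ P)) :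
    -- (i) ↔ (ii)
    ((∀ ⦃A B X Y : E⦄ (t : A ⟶ B) (g : A ⟶ X) (i : B ⟶ Y) (p : X ⟶ Y),
        IsPullback t g i p → L i → R p → L g) ↔
      (∀ ⦃X Y : E⦄ (p : X ⟶ Y), R p → ∀ (P : Over X ⥤ Over Y),
        Nonempty (Over.pullback p ⊣ P) → ∀ q : Over X, R q.hom → R (P.obj q).hom))
    ∧
    -- (i) ↔ (iii)
    ((∀ ⦃A B X Y : E⦄ (t : A ⟶ B) (g : A ⟶ X) (i : B ⟶ Y) (p : X ⟶ Y),
        IsPullback t g i p → L i → R p → L g) ↔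
      (∀ ⦃A B X Y : E⦄ (t : A ⟶ B) (g : A ⟶ X) (i : B ⟶ Y) (p : X ⟶ Y),
        IsPullback t g i p → I i → R p → L g)) := by
  subst hR
  subst hL
  have h13 : (∀ ⦃A B X Y : E⦄ (t : A ⟶ B) (g : A ⟶ X) (i : B ⟶ Y) (p : X ⟶ Y),
        IsPullback t g i p → llp (rlp I) i → rlp I p → llp (rlp I) g) →
      (∀ ⦃A B X Y : E⦄ (t : A ⟶ B) (g : A ⟶ X) (i : B ⟶ Y) (p : X ⟶ Y),
        IsPullback t g i p → I i → rlp I p → llp (rlp I) g) :=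
    fun h _ _ _ _ t g i p pb hi hp => h t g i p pb (fun _ _ r hr => hr i hi) hp
  refine ⟨⟨fun h _ _ p hp P ⟨adj⟩ q hq => rlp_pushforward I (h13 h) p hp P adj q hq,
    fun h _ _ _ _ t g i p pb hi hp => ?_⟩, ⟨h13, fun h _ _ _ _ t g i p pb hi hp => ?_⟩⟩
  · obtain ⟨P, ⟨adj⟩⟩ := hadj p hp
    exact llp_of_pushforward I t g i p pb hi P adj (h p hp P ⟨adj⟩)
  · obtain ⟨P, ⟨adj⟩⟩ := hadj p hp
    exact llp_of_pushforward I t g i p pb hi P adj (rlp_pushforward I h p hp P adj)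

end GS
end

section
/- Let E be a category with pushouts and pullbacks equipped with a functorial cylinder I⊗(−) that has a right adjoint exp(I,−). Let I be a class of maps, set Cof = llp(rlp(I)), I_⊗ = { δᵏ ⊗̂ i : i ∈ I, k ∈ {0,1} }, Fib = rlp(I_⊗), and TrivCof = llp(Fib). Then for every map f : X → Y in Cof and every k ∈ {0,1}, the Leibniz product δᵏ ⊗̂ f lies in TrivCof. -/
/-!
Statement 2 (Corollary `thm:kcyl-of-cof-is-trivcof-non-alg`): if `f ∈ Cof = llp(rlp I)`
then `δᵏ ⊗̂ f ∈ TrivCof = llp(Fib)`, where `Fib = rlp(I_⊗)`.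
-/

open CategoryTheory Category Limits

universe v u

namespace GS

variable {E : Type u} [Category.{v} E]

structure Cylinder (E : Type u) [Category.{v} E] where
  I : E ⥤ E
  δ : Fin 2 → (𝟭 E ⟶ I)

variable (Q : Cylinder E)

noncomputable def Cylinder.leibniz [HasPushouts E] (k : Fin 2) {A B : E} (i : A ⟶ B) :
    pushout ((Q.δ k).app A) i ⟶ Q.I.obj B :=
  pushout.desc (Q.I.map i) ((Q.δ k).app B) (by simpa using ((Q.δ k).naturality i).symm)

/-- The class of fibrations: maps with the right lifting property with respect to
the generating trivial cofibrations `I_⊗ = {δᵏ ⊗̂ i | i ∈ I, k ∈ {0,1}}`. -/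
def fib [HasPushouts E] (I : MorphismProperty E) : MorphismProperty E :=
  fun _ _ p => ∀ ⦃A B : E⦄ (i : A ⟶ B), I i → ∀ k : Fin 2,
    HasLiftingProperty (Q.leibniz k i) p

/-- Evaluation at an endpoint, `exp(I, W) ⟶ W`. -/
def Cylinder.ev {Exp : E ⥤ E} (adj : Q.I ⊣ Exp) (k : Fin 2) (W : E) : Exp.obj W ⟶ W :=
  (Q.δ k).app (Exp.obj W) ≫ adj.counit.app W

theorem Cylinder.symm_ev {Exp : E ⥤ E} (adj : Q.I ⊣ Exp) (k : Fin 2) {A W : E}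
    (c : A ⟶ Exp.obj W) :
    (Q.δ k).app A ≫ (adj.homEquiv A W).symm c = c ≫ Q.ev adj k W := by
  have h := (Q.δ k).naturality c
  simp only [Functor.id_map, Functor.id_obj] at h
  rw [Adjunction.homEquiv_counit, Cylinder.ev, ← Category.assoc, ← h, Category.assoc]

theorem Cylinder.homEquiv_ev {Exp : E ⥤ E} (adj : Q.I ⊣ Exp) (k : Fin 2) {A W : E}
    (a : Q.I.obj A ⟶ W) :
    adj.homEquiv A W a ≫ Q.ev adj k W = (Q.δ k).app A ≫ a := by
  rw [← Q.symm_ev, Equiv.symm_apply_apply]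

theorem Cylinder.ev_naturality {Exp : E ⥤ E} (adj : Q.I ⊣ Exp) (k : Fin 2) {U V : E}
    (p : U ⟶ V) : Exp.map p ≫ Q.ev adj k V = Q.ev adj k U ≫ p := by
  have h := (Q.δ k).naturality (Exp.map p)
  have h2 := adj.counit.naturality p
  simp only [Functor.id_map, Functor.id_obj, Functor.comp_map, Functor.comp_obj] at h h2
  simp only [Cylinder.ev, Category.assoc]
  rw [← h2, ← Category.assoc, h, Category.assoc]

/-- The Leibniz exponential (pullback exponential). -/
noncomputable def Cylinder.leibnizExp [HasPullbacks E] {Exp : E ⥤ E} (adj : Q.I ⊣ Exp)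
    (k : Fin 2) {U V : E} (p : U ⟶ V) : Exp.obj U ⟶ pullback (Q.ev adj k V) p :=
  pullback.lift (Exp.map p) (Q.ev adj k U) (Q.ev_naturality adj k p)

theorem Cylinder.lift_leibnizExp [HasPushouts E] [HasPullbacks E] {Exp : E ⥤ E}
    (adj : Q.I ⊣ Exp) (k : Fin 2) {A B U V : E} (i : A ⟶ B) (p : U ⟶ V)
    (H : HasLiftingProperty (Q.leibniz k i) p) :
    HasLiftingProperty i (Q.leibnizExp adj k p) := by
  refine ⟨fun {a b} sq => ?_⟩
  have w1 : a ≫ Exp.map p = i ≫ b ≫ pullback.fst _ _ := by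
    have := sq.w =≫ pullback.fst _ _
    simpa only [Cylinder.leibnizExp, Category.assoc, pullback.lift_fst, pullback.lift_snd] using this
  have w2 : a ≫ Q.ev adj k U = i ≫ b ≫ pullback.snd _ _ := by
    have := sq.w =≫ pullback.snd _ _
    simpa only [Cylinder.leibnizExp, Category.assoc, pullback.lift_fst, pullback.lift_snd] using this
  have sq2 : CommSq (pushout.desc ((adj.homEquiv A U).symm a) (b ≫ pullback.snd _ _)
      ((Q.symm_ev adj k a).trans w2)) (Q.leibniz k i) p
      ((adj.homEquiv B V).symm (b ≫ pullback.fst _ _)) := by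
    constructor
    apply pushout.hom_ext
    · simp only [Cylinder.leibniz, pushout.inl_desc_assoc]
      rw [← Adjunction.homEquiv_naturality_right_symm, w1,
        Adjunction.homEquiv_naturality_left_symm]
    · simp only [Cylinder.leibniz, pushout.inr_desc_assoc]
      rw [Q.symm_ev, Category.assoc, Category.assoc, pullback.condition]
  have := H.sq_hasLift sq2
  have f1 : Q.I.map i ≫ sq2.lift = (adj.homEquiv A U).symm a := by
    have := pushout.inl _ _ ≫= sq2.fac_left
    simpa only [Cylinder.leibniz, pushout.inl_desc_assoc, pushout.inl_desc, Category.assoc] using this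
  have f2 : (Q.δ k).app B ≫ sq2.lift = b ≫ pullback.snd _ _ := by
    have := pushout.inr _ _ ≫= sq2.fac_left
    simpa only [Cylinder.leibniz, pushout.inr_desc_assoc, pushout.inr_desc] using this
  refine ⟨⟨⟨adj.homEquiv B U sq2.lift, ?_, ?_⟩⟩⟩
  · rw [← Adjunction.homEquiv_naturality_left, f1, Equiv.apply_symm_apply]
  · apply pullback.hom_ext
    · rw [Category.assoc, Cylinder.leibnizExp, pullback.lift_fst,
        ← Adjunction.homEquiv_naturality_right, sq2.fac_right, Equiv.apply_symm_apply]
    · rw [Category.assoc, Cylinder.leibnizExp, pullback.lift_snd, Q.homEquiv_ev, f2]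

theorem Cylinder.lift_leibniz [HasPushouts E] [HasPullbacks E] {Exp : E ⥤ E}
    (adj : Q.I ⊣ Exp) (k : Fin 2) {A B U V : E} (i : A ⟶ B) (p : U ⟶ V)
    (H : HasLiftingProperty i (Q.leibnizExp adj k p)) :
    HasLiftingProperty (Q.leibniz k i) p := by
  refine ⟨fun {u w} sq => ?_⟩
  have w1 : (pushout.inl _ _ ≫ u) ≫ p = Q.I.map i ≫ w := by
    have := pushout.inl _ _ ≫= sq.w
    simpa only [Cylinder.leibniz, pushout.inl_desc_assoc, pushout.inl_desc, Category.assoc] using this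
  have w2 : (pushout.inr _ _ ≫ u) ≫ p = (Q.δ k).app B ≫ w := by
    have := pushout.inr _ _ ≫= sq.w
    simpa only [Cylinder.leibniz, pushout.inr_desc_assoc, Category.assoc] using this
  have sq2 : CommSq (adj.homEquiv A U (pushout.inl _ _ ≫ u)) i (Q.leibnizExp adj k p)
      (pullback.lift (adj.homEquiv B V w) (pushout.inr _ _ ≫ u)
        ((Q.homEquiv_ev adj k w).trans w2.symm)) := by
    constructor
    apply pullback.hom_ext
    · rw [Category.assoc, Category.assoc, Cylinder.leibnizExp, pullback.lift_fst,
        pullback.lift_fst, ← Adjunction.homEquiv_naturality_right, w1,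
        Adjunction.homEquiv_naturality_left]
    · rw [Category.assoc, Category.assoc, Cylinder.leibnizExp, pullback.lift_snd,
        pullback.lift_snd, Q.homEquiv_ev]
      exact pushout.condition_assoc _
  have := H.sq_hasLift sq2
  have f1 : sq2.lift ≫ Exp.map p = adj.homEquiv B V w := by
    have := sq2.fac_right =≫ pullback.fst _ _
    simpa only [Cylinder.leibnizExp, Category.assoc, pullback.lift_fst] using this
  have f2 : sq2.lift ≫ Q.ev adj k U = pushout.inr _ _ ≫ u := by
    have := sq2.fac_right =≫ pullback.snd _ _
    simpa only [Cylinder.leibnizExp, Category.assoc, pullback.lift_snd] using this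
  refine ⟨⟨⟨(adj.homEquiv B U).symm sq2.lift, ?_, ?_⟩⟩⟩
  · apply pushout.hom_ext
    · simp only [Cylinder.leibniz, pushout.inl_desc_assoc]
      rw [← Adjunction.homEquiv_naturality_left_symm, sq2.fac_left, Equiv.symm_apply_apply]
    · simp only [Cylinder.leibniz, pushout.inr_desc_assoc]
      rw [Q.symm_ev, f2]
  · rw [← Adjunction.homEquiv_naturality_right_symm, f1, Equiv.symm_apply_apply]

theorem leibniz_of_cof_mem_trivCof [HasPushouts E] [HasPullbacks E]
    (Exp : E ⥤ E) (adj : Q.I ⊣ Exp) (I : MorphismProperty E)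
    {X Y : E} (f : X ⟶ Y) (hf : llp (rlp I) f) (k : Fin 2) :
    llp (fib Q I) (Q.leibniz k f) := by
  intro U V p hp
  exact Q.lift_leibniz adj k f p
    (hf _ fun _ _ i hi => Q.lift_leibnizExp adj k i p (hp i hi k))

end GS
end

section
/- Let E be a category with pushouts equipped with a functorial cylinder I⊗(−) with endpoint inclusions δ⁰, δ¹. Fix k ∈ {0,1}. A map f : X → Y is a strong k-oriented homotopy equivalence if and only if the morphism θᵏ ⊗̂ f : f → δᵏ ⊗̂ f in the arrow category exhibits f as a retract of δᵏ ⊗̂ f; that is, if and only if there exist maps r : (I⊗X) +_X Y → X and s : I⊗Y → Y forming a morphism (r,s) : δᵏ ⊗̂ f → f in the arrow category such that (r,s) ∘ (θᵏ ⊗̂ f) is the identity on f. -/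
/-!
Statement 3 (Lemma `strong-h-equiv-as-section-non-alg`): a map `f : X ⟶ Y` is a strong
`k`-oriented homotopy equivalence if and only if `θᵏ ⊗̂ f : f ⟶ δᵏ ⊗̂ f` exhibits `f`
as a retract of `δᵏ ⊗̂ f` in the arrow category.
-/

open CategoryTheory Category Limits

universe v u

namespace GS

variable {E : Type u} [Category.{v} E]

variable (Q : Cylinder E)

def IsStrongHEquivWith (k : Fin 2) {X Y : E} (f : X ⟶ Y)
    (g : Y ⟶ X) (φ : Q.I.obj X ⟶ X) (ψ : Q.I.obj Y ⟶ Y) : Prop :=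
  (Q.δ k).app X ≫ φ = f ≫ g ∧ (Q.δ (1 - k)).app X ≫ φ = 𝟙 X ∧
  (Q.δ k).app Y ≫ ψ = g ≫ f ∧ (Q.δ (1 - k)).app Y ≫ ψ = 𝟙 Y ∧
  φ ≫ f = Q.I.map f ≫ ψ

def IsStrongHEquiv (k : Fin 2) {X Y : E} (f : X ⟶ Y) : Prop :=
  ∃ g φ ψ, IsStrongHEquivWith Q k f g φ ψ

theorem strongHEquiv_iff_retract [HasPushouts E] (k : Fin 2) {X Y : E} (f : X ⟶ Y) :
    IsStrongHEquiv Q k f ↔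
      ∃ (r : pushout ((Q.δ k).app X) f ⟶ X) (s : Q.I.obj Y ⟶ Y),
        -- `(r, s)` is a morphism `δᵏ ⊗̂ f ⟶ f` in the arrow category
        r ≫ f = Q.leibniz k f ≫ s ∧
        -- the composite with `θᵏ ⊗̂ f : f ⟶ δᵏ ⊗̂ f` is the identity on `f`
        ((Q.δ (1 - k)).app X ≫ pushout.inl ((Q.δ k).app X) f) ≫ r = 𝟙 X ∧
        (Q.δ (1 - k)).app Y ≫ s = 𝟙 Y := by
  have hinl : pushout.inl ((Q.δ k).app X) f ≫ Q.leibniz k f = Q.I.map f :=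
    pushout.inl_desc _ _ _
  have hinr : pushout.inr ((Q.δ k).app X) f ≫ Q.leibniz k f = (Q.δ k).app Y :=
    pushout.inr_desc _ _ _
  have hc : (Q.δ k).app X ≫ pushout.inl ((Q.δ k).app X) f
      = f ≫ pushout.inr ((Q.δ k).app X) f := pushout.condition
  constructor
  · rintro ⟨g, φ, ψ, h1, h2, h3, h4, h5⟩
    have hl : pushout.inl ((Q.δ k).app X) f ≫ pushout.desc φ g h1 = φ :=
      pushout.inl_desc _ _ _
    have hr : pushout.inr ((Q.δ k).app X) f ≫ pushout.desc φ g h1 = g :=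
      pushout.inr_desc _ _ _
    refine ⟨pushout.desc φ g h1, ψ, ?_, ?_, h4⟩
    · apply pushout.hom_ext
      · rw [← Category.assoc, ← Category.assoc, hl, hinl, h5]
      · exact (Category.assoc _ _ _).symm.trans <| (congrArg (· ≫ f) hr).trans <|
          h3.symm.trans <| (congrArg (· ≫ ψ) hinr).symm.trans (Category.assoc _ _ _)
    · exact (Category.assoc _ _ _).trans ((congrArg ((Q.δ (1 - k)).app X ≫ ·) hl).trans h2)
  · rintro ⟨r, s, h1, h2, h3⟩
    refine ⟨pushout.inr ((Q.δ k).app X) f ≫ r, pushout.inl ((Q.δ k).app X) f ≫ r, s,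
      ?_, ?_, ?_, h3, ?_⟩
    · exact (Category.assoc _ _ _).symm.trans <| (congrArg (· ≫ r) hc).trans
        (Category.assoc _ _ _)
    · exact (Category.assoc _ _ _).symm.trans h2
    · exact (congrArg (· ≫ s) hinr).symm.trans <| (Category.assoc _ _ _).trans <|
        (congrArg (pushout.inr ((Q.δ k).app X) f ≫ ·) h1).symm.trans
          (Category.assoc _ _ _).symm
    · rw [Category.assoc, h1, ← Category.assoc, hinl]

end GS
end

section
/- Let E be a category with pushouts equipped with a functorial cylinder I⊗(−) that preserves pushouts (for instance, because it has a right adjoint) and that has contractions ε and connections c⁰, c¹. Then for every map h : X → Y and every k ∈ {0,1}, the Leibniz product δᵏ ⊗̂ h : (I⊗X) +_X Y → I⊗Y is a strong k-oriented homotopy equivalence. -/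
/-!
Statement 4 (Lemma `thm:kcylf-is-she`): for every map `h : X ⟶ Y`, the Leibniz product
`δᵏ ⊗̂ h` is a strong `k`-oriented homotopy equivalence (assuming the functorial
cylinder preserves pushouts and has contractions and connections).
-/

open CategoryTheory Category Limits

universe v u

namespace GS

variable {E : Type u} [Category.{v} E]

variable (Q : Cylinder E)

/-- Contractions and connections on a functorial cylinder. -/
structure Connections (Q : Cylinder E) where
  ε : Q.I ⟶ 𝟭 E
  contr : ∀ (k : Fin 2) (X : E), (Q.δ k).app X ≫ ε.app X = 𝟙 X
  c : Fin 2 → (Q.I ⋙ Q.I ⟶ Q.I)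
  conn_δ_cyl : ∀ (k : Fin 2) (X : E),
    (Q.δ k).app (Q.I.obj X) ≫ (c k).app X = ε.app X ≫ (Q.δ k).app X
  conn_cyl_δ : ∀ (k : Fin 2) (X : E),
    Q.I.map ((Q.δ k).app X) ≫ (c k).app X = ε.app X ≫ (Q.δ k).app X
  conn_δ'_cyl : ∀ (k : Fin 2) (X : E),
    (Q.δ (1 - k)).app (Q.I.obj X) ≫ (c k).app X = 𝟙 (Q.I.obj X)
  conn_cyl_δ' : ∀ (k : Fin 2) (X : E),
    Q.I.map ((Q.δ (1 - k)).app X) ≫ (c k).app X = 𝟙 (Q.I.obj X)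

theorem leibniz_isStrongHEquiv [HasPushouts E]
    [PreservesColimitsOfShape WalkingSpan Q.I] (conn : Connections Q)
    {X Y : E} (h : X ⟶ Y) (k : Fin 2) :
    IsStrongHEquiv Q k (Q.leibniz k h) := by
  have hP := (IsPushout.of_hasPushout ((Q.δ k).app X) h)
  have hI := hP.map Q.I
  have hεh : Q.I.map h ≫ conn.ε.app Y = conn.ε.app X ≫ h := conn.ε.naturality h
  have hc : Q.I.map (Q.I.map h) ≫ (conn.c k).app Y = (conn.c k).app X ≫ Q.I.map h :=
    (conn.c k).naturality h
  have hδ : ∀ (j : Fin 2) {A B : E} (a : A ⟶ B),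
      a ≫ (Q.δ j).app B = (Q.δ j).app A ≫ Q.I.map a := fun j _ _ a => (Q.δ j).naturality a
  have hl : pushout.inl ((Q.δ k).app X) h ≫ Q.leibniz k h = Q.I.map h := by
    exact pushout.inl_desc _ _ _
  have hr : pushout.inr ((Q.δ k).app X) h ≫ Q.leibniz k h = (Q.δ k).app Y := by
    exact pushout.inr_desc _ _ _
  have hw : (Q.δ k).app X ≫ pushout.inl ((Q.δ k).app X) h =
      h ≫ pushout.inr ((Q.δ k).app X) h := pushout.condition
  have w : Q.I.map ((Q.δ k).app X) ≫ ((conn.c k).app X ≫ pushout.inl ((Q.δ k).app X) h) =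
      Q.I.map h ≫ (conn.ε.app Y ≫ pushout.inr ((Q.δ k).app X) h) := by
    rw [← assoc, conn.conn_cyl_δ, ← assoc, hεh, assoc, assoc]
    exact congrArg (conn.ε.app X ≫ ·) hw
  obtain ⟨φ, hφl, hφr⟩ := hI.exists_desc _ _ w
  refine ⟨conn.ε.app Y ≫ pushout.inr _ _, φ, (conn.c k).app Y, ?_, ?_, ?_, ?_, ?_⟩
  · apply hP.hom_ext
    · rw [← assoc, hδ, assoc, hφl, ← assoc, conn.conn_δ_cyl, ← assoc, hl, ← assoc, hεh]
      erw [assoc, assoc, hw]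
    · rw [← assoc, hδ, assoc, hφr, ← assoc, conn.contr, ← assoc, hr, ← assoc, conn.contr]
  · apply hP.hom_ext
    · rw [← assoc, hδ, assoc, hφl, ← assoc, conn.conn_δ'_cyl]
      erw [id_comp, comp_id]
    · rw [← assoc, hδ, assoc, hφr, ← assoc, conn.contr]
      erw [id_comp, comp_id]
  · rw [conn.conn_δ_cyl, assoc, hr]
  · exact conn.conn_δ'_cyl k Y
  · apply hI.hom_ext
    · rw [← assoc, hφl, assoc, hl, ← assoc, ← Q.I.map_comp, hl, hc]
    · rw [← assoc, hφr, assoc, hr, ← assoc, ← Q.I.map_comp, hr, conn.conn_cyl_δ]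

end GS
end

section
/- Let E be a finitely complete and cocomplete category equipped with a functorial cylinder I⊗(−) having contractions, connections, and a right adjoint. Let I be a set of maps, Cof = llp(rlp(I)), and assume that Cof is closed under Leibniz product with the endpoint inclusions (i.e., i ∈ Cof implies δᵏ ⊗̂ i ∈ Cof for k ∈ {0,1}). Let I_⊗ = { δᵏ ⊗̂ i : i ∈ I, k ∈ {0,1} } and let S be the class of maps that are strong 0-oriented or strong 1-oriented homotopy equivalences. Then every map in I_⊗ lies in Cof ∩ S. -/
/-!
Statement 6 (Lemma `thm:main-sheretract`(i)): every generating trivial cofibration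
`δᵏ ⊗̂ i` (for `i ∈ I`, `k ∈ {0,1}`) is both a cofibration and a strong homotopy
equivalence, i.e. `I_⊗ ⊆ Cof ∩ S`.
-/

open CategoryTheory Category Limits

universe v u

namespace GS

variable {E : Type u} [Category.{v} E]

variable (Q : Cylinder E)

theorem leibniz_strong [HasPushouts E] (conn : Connections Q) (Exp : E ⥤ E) (adj : Q.I ⊣ Exp)
    {A B : E} (i : A ⟶ B) (k : Fin 2) : IsStrongHEquiv Q k (Q.leibniz k i) := by
  have hpres : PreservesColimitsOfShape WalkingSpan Q.I :=
    adj.leftAdjoint_preservesColimits.preservesColimitsOfShape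
  have po : IsPushout (Q.I.map ((Q.δ k).app A)) (Q.I.map i)
      (Q.I.map (pushout.inl ((Q.δ k).app A) i)) (Q.I.map (pushout.inr ((Q.δ k).app A) i)) :=
    (IsPushout.of_hasPushout ((Q.δ k).app A) i).map Q.I
  have nδ : ∀ (j : Fin 2) {X Y : E} (h : X ⟶ Y),
      h ≫ (Q.δ j).app Y = (Q.δ j).app X ≫ Q.I.map h := fun j _ _ h => (Q.δ j).naturality h
  have nε : ∀ {X Y : E} (h : X ⟶ Y),
      Q.I.map h ≫ conn.ε.app Y = conn.ε.app X ≫ h := fun h => conn.ε.naturality h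
  have nc : ∀ {X Y : E} (h : X ⟶ Y),
      Q.I.map (Q.I.map h) ≫ (conn.c k).app Y = (conn.c k).app X ≫ Q.I.map h :=
    fun h => (conn.c k).naturality h
  have cond : (Q.δ k).app A ≫ pushout.inl ((Q.δ k).app A) i
      = i ≫ pushout.inr ((Q.δ k).app A) i := pushout.condition
  have hl : pushout.inl ((Q.δ k).app A) i ≫ Q.leibniz k i = Q.I.map i := pushout.inl_desc _ _ _
  have hr : pushout.inr ((Q.δ k).app A) i ≫ Q.leibniz k i = (Q.δ k).app B :=
    pushout.inr_desc _ _ _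
  have w : Q.I.map ((Q.δ k).app A) ≫ (conn.c k).app A ≫ pushout.inl ((Q.δ k).app A) i
      = Q.I.map i ≫ conn.ε.app B ≫ pushout.inr ((Q.δ k).app A) i := by
    have h1 := conn.conn_cyl_δ k A
    rw [← assoc]
    erw [h1]
    rw [assoc]
    erw [cond]
    rw [← assoc, ← assoc, nε]
  obtain ⟨φ, h1, h2⟩ : ∃ φ : Q.I.obj (pushout ((Q.δ k).app A) i) ⟶ pushout ((Q.δ k).app A) i,
      Q.I.map (pushout.inl ((Q.δ k).app A) i) ≫ φ
        = (conn.c k).app A ≫ pushout.inl ((Q.δ k).app A) i ∧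
      Q.I.map (pushout.inr ((Q.δ k).app A) i) ≫ φ
        = conn.ε.app B ≫ pushout.inr ((Q.δ k).app A) i :=
    ⟨po.desc _ _ w, po.inl_desc _ _ w, po.inr_desc _ _ w⟩
  generalize Q.leibniz k i = f at *
  generalize hinl : pushout.inl ((Q.δ k).app A) i = l at *
  generalize hinr : pushout.inr ((Q.δ k).app A) i = r at *
  have hext : ∀ {W : E} (a b : pushout ((Q.δ k).app A) i ⟶ W), l ≫ a = l ≫ b →
      r ≫ a = r ≫ b → a = b := by
    intro W a b ha hb
    subst hinl hinr
    exact pushout.hom_ext ha hb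
  have e1 := conn.conn_δ_cyl k
  have e2 := conn.conn_cyl_δ k
  have e3 := conn.conn_δ'_cyl k
  have e4 := conn.contr
  refine ⟨conn.ε.app B ≫ r, φ, (conn.c k).app B, ?_, ?_, ?_, ?_, ?_⟩
  · apply hext
    · calc l ≫ (Q.δ k).app _ ≫ φ = ((Q.δ k).app _ ≫ Q.I.map l) ≫ φ := by
            rw [← nδ, assoc]; rfl
        _ = ((Q.δ k).app _ ≫ (conn.c k).app A) ≫ l := by rw [assoc, h1]; exact (assoc _ _ _).symm
        _ = (conn.ε.app A ≫ (Q.δ k).app A) ≫ l := by rw [e1]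
        _ = conn.ε.app A ≫ i ≫ r := (assoc _ _ _).trans (congrArg _ cond)
        _ = (Q.I.map i ≫ conn.ε.app B) ≫ r := by rw [nε]; exact (assoc _ _ _).symm
        _ = l ≫ f ≫ conn.ε.app B ≫ r := by rw [← hl]; simp only [assoc]
    · calc r ≫ (Q.δ k).app _ ≫ φ = ((Q.δ k).app _ ≫ Q.I.map r) ≫ φ := by
            rw [← nδ, assoc]; rfl
        _ = ((Q.δ k).app _ ≫ conn.ε.app B) ≫ r := by rw [assoc, h2]; exact (assoc _ _ _).symm
        _ = (r ≫ f) ≫ conn.ε.app B ≫ r := by rw [hr]; exact assoc _ _ _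
        _ = r ≫ f ≫ conn.ε.app B ≫ r := assoc _ _ _
  · apply hext
    · calc l ≫ (Q.δ (1 - k)).app _ ≫ φ = ((Q.δ (1 - k)).app _ ≫ Q.I.map l) ≫ φ := by
            rw [← nδ, assoc]; rfl
        _ = ((Q.δ (1 - k)).app _ ≫ (conn.c k).app A) ≫ l := by
            rw [assoc, h1]; exact (assoc _ _ _).symm
        _ = l ≫ 𝟙 _ := by rw [e3, comp_id]; exact id_comp l
    · calc r ≫ (Q.δ (1 - k)).app _ ≫ φ = ((Q.δ (1 - k)).app _ ≫ Q.I.map r) ≫ φ := by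
            rw [← nδ, assoc]; rfl
        _ = ((Q.δ (1 - k)).app _ ≫ conn.ε.app B) ≫ r := by
            rw [assoc, h2]; exact (assoc _ _ _).symm
        _ = r ≫ 𝟙 _ := by rw [e4, comp_id]; exact id_comp r
  · rw [e1, assoc, hr]
  · exact e3 B
  · apply po.hom_ext
    · calc Q.I.map l ≫ φ ≫ f = (Q.I.map l ≫ φ) ≫ f := (assoc _ _ _).symm
        _ = (conn.c k).app A ≫ l ≫ f := by rw [h1]; exact assoc _ _ _
        _ = Q.I.map (Q.I.map i) ≫ (conn.c k).app B := by rw [hl, nc]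
        _ = Q.I.map l ≫ Q.I.map f ≫ (conn.c k).app B := by
            rw [← hl, Functor.map_comp]; exact assoc _ _ _
    · calc Q.I.map r ≫ φ ≫ f = (Q.I.map r ≫ φ) ≫ f := (assoc _ _ _).symm
        _ = conn.ε.app B ≫ r ≫ f := by rw [h2]; exact assoc _ _ _
        _ = Q.I.map ((Q.δ k).app B) ≫ (conn.c k).app B := by rw [hr, e2]
        _ = Q.I.map r ≫ Q.I.map f ≫ (conn.c k).app B := by
            rw [← hr, Functor.map_comp]; exact assoc _ _ _

theorem generating_trivial_cofibrations_mem_cof_inter_S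
    [HasFiniteLimits E] [HasFiniteColimits E]
    (conn : Connections Q) (Exp : E ⥤ E) (adj : Q.I ⊣ Exp)
    (I : MorphismProperty E)
    -- (S4): cofibrations are closed under Leibniz product with the endpoint inclusions
    (hS4 : ∀ ⦃A B : E⦄ (i : A ⟶ B), llp (rlp I) i → ∀ k : Fin 2,
      llp (rlp I) (Q.leibniz k i))
    ⦃A B : E⦄ (i : A ⟶ B) (hi : I i) (k : Fin 2) :
    llp (rlp I) (Q.leibniz k i) ∧
      (IsStrongHEquiv Q 0 (Q.leibniz k i) ∨ IsStrongHEquiv Q 1 (Q.leibniz k i)) := by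
  refine ⟨hS4 i (fun _ _ p hp => hp i hi) k, ?_⟩
  have h := leibniz_strong Q conn Exp adj i k
  rcases (by omega : k = 0 ∨ k = 1) with rfl | rfl
  · exact Or.inl h
  · exact Or.inr h

end GS
end

section
/- Let C be a small category and E = Psh(C). Let M be a class of monomorphisms in E such that: (a) M contains all identity maps; (b) M is stable under pullback; and (c) M is local with respect to representables, i.e., a monomorphism i : A → B lies in M whenever, for every x ∈ C and every map b : y(x) → B, the pullback of i along b lies in M. Then there exists a presheaf K and a monomorphism τ : 1 → K from the terminal presheaf such that a map i : A → B lies in M if and only if there exists a map χ : B → K making the square with sides i, the unique map A → 1, τ, and χ a pullback square. -/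
/-!
Statement 13 (Lemma `partial-map-classifier`, classifier part): a class `M` of
monomorphisms in a presheaf category that contains identities, is stable under
pullback and is local with respect to representables admits a classifier
`τ : 1 ⟶ K`: a map lies in `M` iff it is a pullback of `τ`.
-/

open CategoryTheory Category Limits

universe u

namespace GS

variable {C : Type u} [SmallCategory C]

/-- Every monomorphism of presheaves is a pullback of a fixed `t : 1 ⟶ Ω`. -/
lemma exists_truth (C : Type u) [SmallCategory C] :
    ∃ (Om : Cᵒᵖ ⥤ Type u) (t : ⊤_ (Cᵒᵖ ⥤ Type u) ⟶ Om),
      ∀ ⦃A B : Cᵒᵖ ⥤ Type u⦄ (i : A ⟶ B), Mono i →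
        ∃ χ : B ⟶ Om, IsPullback (terminal.from A) i t χ := by
  let hT : IsTerminal ((Functor.const Cᵒᵖ).obj (PUnit : Type u)) :=
    Functor.isTerminalConst _ Types.isTerminalPUnit
  let e : ⊤_ (Cᵒᵖ ⥤ Type u) ≅ (Functor.const Cᵒᵖ).obj (PUnit : Type u) :=
    terminalIsTerminal.uniqueUpToIso hT
  refine ⟨Functor.sieves C, e.hom ≫ Presheaf.truth C, fun A B i hi => ⟨Presheaf.χ i, ?_⟩⟩
  refine IsPullback.of_iso (Presheaf.isPullback_χ_truth i).flip (Iso.refl _) e.symm (Iso.refl _)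
    (Iso.refl _) (Subsingleton.elim _ _) (by simp) (by simp) (by simp)

theorem exists_classifier (M : MorphismProperty (Cᵒᵖ ⥤ Type u))
    -- M is a class of monomorphisms
    (hmono : ∀ ⦃A B : Cᵒᵖ ⥤ Type u⦄ (i : A ⟶ B), M i → Mono i)
    -- (a) M contains all identities
    (hid : ∀ X : Cᵒᵖ ⥤ Type u, M (𝟙 X))
    -- (b) M is stable under pullback
    (hpb : ∀ ⦃A' A B' B : Cᵒᵖ ⥤ Type u⦄ (t : A' ⟶ A) (i' : A' ⟶ B') (i : A ⟶ B)
      (b : B' ⟶ B), IsPullback t i' i b → M i → M i')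
    -- (c) M is local with respect to representables
    (hloc : ∀ ⦃A B : Cᵒᵖ ⥤ Type u⦄ (i : A ⟶ B), Mono i →
      (∀ (x : C) (b : yoneda.obj x ⟶ B), M (pullback.snd i b)) → M i) :
    ∃ (K : Cᵒᵖ ⥤ Type u) (τ : ⊤_ (Cᵒᵖ ⥤ Type u) ⟶ K), Mono τ ∧
      ∀ ⦃A B : Cᵒᵖ ⥤ Type u⦄ (i : A ⟶ B),
        M i ↔ ∃ χ : B ⟶ K, IsPullback (terminal.from A) i τ χ := by
  obtain ⟨Om, t, ht⟩ := exists_truth C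
  -- `M` can be tested on any choice of pullback
  have key : ∀ {P Q A B X : Cᵒᵖ ⥤ Type u} {i : A ⟶ B} {f : X ⟶ B} {h : P ⟶ A} {k : P ⟶ X}
      {h' : Q ⟶ A} {k' : Q ⟶ X}, IsPullback h k i f → IsPullback h' k' i f → M k → M k' := by
    intro P Q A B X i f h k h' k' p q hk
    have q' : IsPullback h' k' i (𝟙 X ≫ f) := by simpa using q
    exact hpb _ _ _ _ (IsPullback.of_right' q' p) hk
  let S : Subfunctor Om :=
    { obj := fun U => {s | M (pullback.snd t (yonedaEquiv (X := U.unop).symm s))}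
      map := by
        intro U V f s hs
        change M (pullback.snd t (yonedaEquiv (X := V.unop).symm (Om.map f s)))
        rw [yonedaEquiv_symm_map]
        exact hpb _ _ _ _ (IsPullback.of_right'
          (IsPullback.of_hasPullback t (yoneda.map f.unop ≫ yonedaEquiv.symm s))
          (IsPullback.of_hasPullback t (yonedaEquiv.symm s))) hs }
  -- a map factors through `S` as soon as it does so on generalized elements
  have lift : ∀ {B : Cᵒᵖ ⥤ Type u} (g : B ⟶ Om),
      (∀ (x : C) (b : yoneda.obj x ⟶ B), M (pullback.snd t (b ≫ g))) →
      ∃ g' : B ⟶ S.toFunctor, g' ≫ S.ι = g := by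
    intro B g hg
    refine ⟨Subfunctor.lift g ?_, Subfunctor.lift_ι _ _⟩
    rintro U _ ⟨b, rfl⟩
    change M (pullback.snd t (yonedaEquiv (X := U.unop).symm (g.app U b)))
    have := hg U.unop (yonedaEquiv.symm b)
    have e := yonedaEquiv_symm_naturality_right U.unop g b
    exact key (IsPullback.of_hasPullback t (yonedaEquiv.symm b ≫ g))
      (by rw [e]; exact IsPullback.of_hasPullback _ _) this
  have hS : ∀ (x : C) (b : yoneda.obj x ⟶ S.toFunctor), M (pullback.snd t (b ≫ S.ι)) := by
    intro x b
    have h : M (pullback.snd t (yonedaEquiv.symm (yonedaEquiv b).1)) := (yonedaEquiv b).2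
    have e : yonedaEquiv.symm (yonedaEquiv b).1 = b ≫ S.ι := by
      rw [Equiv.symm_apply_eq]
      rfl
    rwa [e] at h
  have tm : Mono t := ⟨fun _ _ _ => Subsingleton.elim _ _⟩
  obtain ⟨τ, hτ⟩ := lift t (fun x b => by
    have p : IsPullback b (𝟙 _) t (b ≫ t) := IsPullback.of_vert_isIso_mono ⟨by simp⟩
    exact key p (IsPullback.of_hasPullback _ _) (hid _))
  have sq : IsPullback (𝟙 _) τ t S.ι := IsPullback.of_horiz_isIso_mono ⟨by simp [hτ]⟩
  refine ⟨S.toFunctor, τ, ⟨fun _ _ _ => Subsingleton.elim _ _⟩, fun A B i => ⟨fun hi => ?_, ?_⟩⟩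
  · obtain ⟨g, hg⟩ := ht i (hmono i hi)
    obtain ⟨χ, hχ⟩ := lift g (fun x b => by
      have p := (IsPullback.of_hasPullback i b).paste_horiz hg
      exact key p (IsPullback.of_hasPullback _ _) (hpb _ _ _ _ (IsPullback.of_hasPullback i b) hi))
    refine ⟨χ, IsPullback.of_right (h₁₂ := 𝟙 _) (h₂₂ := S.ι) (v₁₃ := t) ?_ ?_ sq⟩
    · simpa [hχ] using hg
    · rw [← cancel_mono S.ι]
      simp [hτ, hχ, hg.w]
  · rintro ⟨χ, hχ⟩
    have τm : Mono τ := ⟨fun _ _ _ => Subsingleton.elim _ _⟩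
    refine hloc i hχ.mono_snd_of_mono (fun x b => ?_)
    have p := (IsPullback.of_hasPullback i b).paste_horiz (hχ.paste_horiz sq)
    rw [← assoc b] at p
    exact key (IsPullback.of_hasPullback _ _) p (hS x (b ≫ χ))

end GS
end

section
/- Let C be a small category and E = Psh(C). Let M be a class of monomorphisms in E that contains all identities, is stable under pullback, and is local with respect to representables (a mono i lies in M whenever all its pullbacks along maps from representables lie in M); let τ : 1 → K be a classifier for M, so that i ∈ M iff i is a pullback of τ. For Y ∈ E, let t = τ × id_Y : Y → K × Y, let π : K × Y → Y be the projection, and define the M-partial map classifier over Y as the endofunctor P_Y = π_! ∘ t_* of E/Y, where t_* is the pushforward (right adjoint to pullback along t) and π_! is composition with π; since t is a monomorphism, for X ∈ E/Y there is a canonical map η_X : X → P_Y(X) over Y fitting in a pullback square with t. Then a map f : X → Y has the right lifting property with respect to every map in M if and only if η_X : X → P_Y(X) admits a retraction in the slice category E/Y. -/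
/-!
Statement 15 (Theorem `thm:part-map-classifier`, non-algebraic form): a map
`f : X ⟶ Y` in a presheaf category has the right lifting property with respect to a
class `M` of monomorphisms (with classifier `τ : 1 ⟶ K`) if and only if the canonical
map `η : X ⟶ P_Y(X)` into the `M`-partial map classifier over `Y` admits a retraction
in the slice over `Y`.
-/

open CategoryTheory Category Limits

universe u

namespace GS

variable {C : Type u} [SmallCategory C]

theorem rlp_iff_retraction_of_partial_map_classifier
    (M : MorphismProperty (Cᵒᵖ ⥤ Type u))
    -- M is a class of monomorphisms
    (hmono : ∀ ⦃A B : Cᵒᵖ ⥤ Type u⦄ (i : A ⟶ B), M i → Mono i)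
    -- M contains all identities
    (hid : ∀ X : Cᵒᵖ ⥤ Type u, M (𝟙 X))
    -- M is stable under pullback
    (hpb : ∀ ⦃A' A B' B : Cᵒᵖ ⥤ Type u⦄ (t : A' ⟶ A) (i' : A' ⟶ B') (i : A ⟶ B)
      (b : B' ⟶ B), IsPullback t i' i b → M i → M i')
    -- M is local with respect to representables
    (hloc : ∀ ⦃A B : Cᵒᵖ ⥤ Type u⦄ (i : A ⟶ B), Mono i →
      (∀ (x : C) (b : yoneda.obj x ⟶ B), M (pullback.snd i b)) → M i)
    -- `τ : 1 ⟶ K` classifies `M`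
    (K : Cᵒᵖ ⥤ Type u) (τ : ⊤_ (Cᵒᵖ ⥤ Type u) ⟶ K)
    (hclass : ∀ ⦃A B : Cᵒᵖ ⥤ Type u⦄ (i : A ⟶ B),
      M i ↔ ∃ χ : B ⟶ K, IsPullback (terminal.from A) i τ χ)
    -- the map `f : X ⟶ Y` under consideration
    {X Y : Cᵒᵖ ⥤ Type u} (f : X ⟶ Y)
    -- `t = τ × id_Y : Y ⟶ K × Y` and the pushforward `t_*` along `t`
    (Pstar : Over Y ⥤ Over (K ⨯ Y))
    (adj : Over.pullback (prod.lift (terminal.from Y ≫ τ) (𝟙 Y)) ⊣ Pstar)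
    -- the canonical unit `η : X ⟶ P_Y(X)`, fitting in a pullback square with `t`
    (η : X ⟶ (Pstar.obj (Over.mk f)).left)
    (hη : IsPullback η f (Pstar.obj (Over.mk f)).hom
      (prod.lift (terminal.from Y ≫ τ) (𝟙 Y))) :
    -- `f` has the right lifting property with respect to `M` iff
    -- `η` admits a retraction in the slice over `Y`
    (∀ ⦃A B : Cᵒᵖ ⥤ Type u⦄ (i : A ⟶ B), M i → HasLiftingProperty i f) ↔
      ∃ r : (Pstar.obj (Over.mk f)).left ⟶ X,
        η ≫ r = 𝟙 X ∧ r ≫ f = (Pstar.obj (Over.mk f)).hom ≫ prod.snd := by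
  have htsnd : prod.lift (terminal.from Y ≫ τ) (𝟙 Y) ≫ prod.snd = 𝟙 Y := prod.lift_snd _ _
  have htfst : prod.lift (terminal.from Y ≫ τ) (𝟙 Y) ≫ prod.fst = terminal.from Y ≫ τ :=
    prod.lift_fst _ _
  generalize prod.lift (terminal.from Y ≫ τ) (𝟙 Y) = t at *
  have htm : Mono t := by
    have : Mono (t ≫ prod.snd) := by rw [htsnd]; infer_instance
    exact mono_of_mono t prod.snd
  have hτ : IsPullback (terminal.from Y) t τ prod.fst := by
    refine ⟨⟨htfst.symm⟩, ⟨PullbackCone.IsLimit.mk _ (fun c => c.snd ≫ prod.snd)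
      (fun c => Subsingleton.elim _ _) (fun c => ?_) (fun c m _ h => ?_)⟩⟩
    · have hc : c.fst ≫ τ = c.snd ≫ prod.fst := c.condition
      apply Limits.prod.hom_ext
      · rw [assoc, assoc, htfst, ← hc, ← assoc, ← assoc]
        congr 1
        exact Subsingleton.elim _ _
      · rw [assoc, assoc, htsnd, comp_id]
    · rw [← h, assoc, htsnd, comp_id]
  constructor
  · intro h
    have hM : M η := by
      rw [hclass]
      refine ⟨(Pstar.obj (Over.mk f)).hom ≫ prod.fst, ?_⟩
      have := hη.flip.paste_horiz hτ
      rwa [show f ≫ terminal.from Y = terminal.from X from Subsingleton.elim _ _] at this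
    have := h η hM
    have sq : CommSq (𝟙 X) η f ((Pstar.obj (Over.mk f)).hom ≫ prod.snd) :=
      ⟨by rw [← assoc, hη.w, assoc, htsnd, comp_id, id_comp]⟩
    exact ⟨sq.lift, sq.fac_left, sq.fac_right⟩
  · rintro ⟨r, hr, hrf⟩ A B i hi
    have him := hmono i hi
    obtain ⟨χ, hχ⟩ := (hclass i).1 hi
    refine ⟨fun {u v} sq => ?_⟩
    have hsq : u ≫ f = i ≫ v := sq.w
    let b : B ⟶ K ⨯ Y := prod.lift χ v
    have hb : b ≫ prod.snd = v := prod.lift_snd _ _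
    have hb1 : b ≫ prod.fst = χ := prod.lift_fst _ _
    have hib : i ≫ b = (u ≫ f) ≫ t := by
      apply Limits.prod.hom_ext
      · rw [assoc, assoc, hb1, htfst, ← hχ.w, ← assoc]
        congr 1
        exact Subsingleton.elim _ _
      · rw [assoc, assoc, hb, htsnd, comp_id, hsq]
    -- the inverse of the comparison `A ≅ t^* B`
    let θ : pullback b t ⟶ A := hχ.lift (terminal.from _) (pullback.fst b t) (by
      rw [← hb1, ← assoc, pullback.condition, assoc, htfst, ← assoc]
      congr 1
      exact Subsingleton.elim _ _)
    have hθ : θ ≫ i = pullback.fst b t := hχ.lift_snd _ _ _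
    let k : X ⟶ pullback (f ≫ t) t := pullback.lift (𝟙 X) f (by rw [id_comp])
    have hk1 : k ≫ pullback.fst (f ≫ t) t = 𝟙 X := pullback.lift_fst _ _ _
    have hk2 : k ≫ pullback.snd (f ≫ t) t = f := pullback.lift_snd _ _ _
    let ηo : Over.mk (f ≫ t) ⟶ Pstar.obj (Over.mk f) := Over.homMk η hη.w
    let s := (adj.homEquiv _ _).symm ηo
    let io : Over.mk ((u ≫ f) ≫ t) ⟶ Over.mk b := Over.homMk i hib
    let uo : Over.mk ((u ≫ f) ≫ t) ⟶ Over.mk (f ≫ t) := Over.homMk u (by simp)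
    let q : (Over.pullback t).obj (Over.mk b) ⟶ (Over.pullback t).obj (Over.mk (f ≫ t)) :=
      Over.homMk (θ ≫ u ≫ k) (by
        change (θ ≫ u ≫ k) ≫ pullback.snd (f ≫ t) t = pullback.snd b t
        rw [assoc, assoc, hk2, ← cancel_mono t, ← pullback.condition, ← hθ]
        simp only [assoc] at hib ⊢
        rw [hib])
    let g : Over.mk b ⟶ Pstar.obj (Over.mk f) := adj.homEquiv _ _ (q ≫ s)
    have hq : (Over.pullback t).map io ≫ q = (Over.pullback t).map uo := by
      ext1
      rw [Over.comp_left]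
      have e1 : ((Over.pullback t).map io).left ≫ pullback.fst b t =
          pullback.fst ((u ≫ f) ≫ t) t ≫ i := pullback.lift_fst _ _ _
      have e2 : ((Over.pullback t).map uo).left ≫ pullback.fst (f ≫ t) t =
          pullback.fst ((u ≫ f) ≫ t) t ≫ u := pullback.lift_fst _ _ _
      have hm : Mono (pullback.fst (f ≫ t) t) := inferInstance
      have aux : ∀ {Z : Cᵒᵖ ⥤ Type u} (p : Z ⟶ A) (L₁ : Z ⟶ pullback b t)
          (L₂ : Z ⟶ pullback (f ≫ t) t), L₁ ≫ pullback.fst b t = p ≫ i →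
          L₂ ≫ pullback.fst (f ≫ t) t = p ≫ u → L₁ ≫ θ ≫ u ≫ k = L₂ := by
        intro Z p L₁ L₂ h₁ h₂
        have e3 : L₁ ≫ θ = p := by
          rw [← cancel_mono i, assoc, hθ, h₁]
        refine hm.right_cancellation _ _ ?_
        rw [h₂, assoc, assoc, assoc, hk1, comp_id, ← assoc, e3]
      exact aux _ _ _ e1 e2
    have hg : io ≫ g = uo ≫ ηo := by
      apply (adj.homEquiv _ _).symm.injective
      rw [adj.homEquiv_naturality_left_symm, adj.homEquiv_naturality_left_symm,
        Equiv.symm_apply_apply, ← assoc, hq]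
    have hg' : i ≫ g.left = u ≫ η := congrArg CommaMorphism.left hg
    have hgw : g.left ≫ (Pstar.obj (Over.mk f)).hom = b := Over.w g
    exact ⟨⟨⟨g.left ≫ r, by rw [← assoc, hg', assoc, hr, comp_id],
      by rw [assoc, hrf, ← assoc, hgw, hb]⟩⟩⟩

end GS
end
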